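/- arXiv:2203.08375 — 2 statements merged into one kernel-verified Lean document; each statement's English description precedes it below -/
import Mathlib

section
/- Let d∈(0,1] and 0<d'<d''<d. Then φ̄_d minimizes the energy locally: for every absolutely continuous function ψ:[d',d'']→ℝ whose a.e. derivative belongs to L²(d',d'') and which satisfies ψ(d')=φ̄_d(d') and ψ(d'')=φ̄_d(d''), one has ∫_{d'}^{d''} (|φ̄_d'(s)|²/2 + F(φ̄_d(s)))ds ≤ ∫_{d'}^{d''} (|ψ'(s)|²/2 + F(ψ(s)))ds. -/
open Real Set MeasureTheory

noncomputable section

/-- `φ` solves the boundary value problem `φ'' = f(φ)` on `(0,d)`, `φ(0) = 0`,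
`φ(d) = Q`, `0 < φ < Q` on `(0,d)`, with `φ ∈ C²((0,d)) ∩ C¹([0,d])`. -/
def IsBVPSol (Q : ℝ) (f : ℝ → ℝ) (d : ℝ) (φ : ℝ → ℝ) : Prop :=
  ContDiffOn ℝ 1 φ (Set.Icc 0 d) ∧ ContDiffOn ℝ 2 φ (Set.Ioo 0 d) ∧
  (∀ x ∈ Set.Ioo (0 : ℝ) d, deriv (deriv φ) x = f (φ x)) ∧
  φ 0 = 0 ∧ φ d = Q ∧ (∀ x ∈ Set.Ioo (0 : ℝ) d, 0 < φ x ∧ φ x < Q)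

/-- The composition of a Lipschitz function with an absolutely continuous function is absolutely
continuous. -/
theorem LipschitzOnWith.comp_absolutelyContinuousOnInterval {K : NNReal} {H : ℝ → ℝ} {s : Set ℝ}
    {ψ : ℝ → ℝ} {a b : ℝ} (hH : LipschitzOnWith K H s)
    (hψ : AbsolutelyContinuousOnInterval ψ a b) (hs : MapsTo ψ (uIcc a b) s) :
    AbsolutelyContinuousOnInterval (fun x => H (ψ x)) a b := by
  have hlim := Filter.Tendsto.const_mul (K : ℝ) hψ
  rw [mul_zero] at hlim
  refine squeeze_zero' (Filter.Eventually.of_forall fun E =>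
    Finset.sum_nonneg fun i _ => dist_nonneg) ?_ hlim
  filter_upwards [Filter.mem_inf_of_right (Filter.mem_principal_self _)] with E hE
  rw [Finset.mul_sum]
  exact Finset.sum_le_sum fun i hi =>
    hH.dist_le_mul _ (hs (hE.1 i hi).1) _ (hs (hE.1 i hi).2)

/-- Change of variables along the primitive of an integrable function. -/
theorem integral_comp_primitive_mul {h g : ℝ → ℝ} (hh : Continuous h) {a b : ℝ}
    (hg : IntervalIntegrable g volume a b) (c : ℝ) :
    ∫ x in a..b, h (c + ∫ s in a..x, g s) * g x =
      ∫ u in c..(c + ∫ s in a..b, g s), h u := by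
  set Ψ : ℝ → ℝ := fun x => c + ∫ s in a..x, g s with hΨ
  set H : ℝ → ℝ := fun u => ∫ v in c..u, h v with hHdef
  have hH (u : ℝ) : HasDerivAt H (h u) u := hh.integral_hasStrictDerivAt c u |>.hasDerivAt
  have hac₀ : AbsolutelyContinuousOnInterval (fun x => ∫ s in a..x, g s) a b :=
    hg.absolutelyContinuousOnInterval_intervalIntegral (c := a) (by simp)
  have hconst : AbsolutelyContinuousOnInterval (fun _ : ℝ => c) a b := by
    simpa [AbsolutelyContinuousOnInterval] using tendsto_const_nhds
  have hac : AbsolutelyContinuousOnInterval Ψ a b := hconst.fun_add hac₀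
  obtain ⟨C, hC⟩ := hac.exists_bound
  have hmaps : MapsTo Ψ (uIcc a b) (Icc (-C) C) := fun x hx => abs_le.1 (hC x hx)
  obtain ⟨M, hM⟩ := isCompact_Icc.exists_bound_of_continuousOn (s := Icc (-C) C) hh.continuousOn
  have hLip : LipschitzOnWith M.toNNReal H (Icc (-C) C) :=
    (convex_Icc _ _).lipschitzOnWith_of_nnnorm_hasDerivWithin_le
      (fun u _ => (hH u).hasDerivWithinAt) fun u hu => by
        rw [← NNReal.coe_le_coe, coe_nnnorm]
        exact (hM u hu).trans (Real.le_coe_toNNReal M)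
  have hFTC := (hLip.comp_absolutelyContinuousOnInterval hac hmaps).integral_deriv_eq_sub
  have hcongr : ∫ x in a..b, h (Ψ x) * g x = ∫ x in a..b, deriv (fun x => H (Ψ x)) x := by
    refine intervalIntegral.integral_congr_ae ?_
    filter_upwards [hg.ae_hasDerivAt_integral] with x hx hxab
    have hd : HasDerivAt Ψ (g x) x :=
      (hx (uIoc_subset_uIcc hxab) a left_mem_uIcc).const_add c
    exact ((hH (Ψ x)).comp x hd).deriv.symm
  rw [hcongr, hFTC]
  simp [hHdef, hΨ]

/-- A solution of the first-order equation `φ' = √(2 (F(φ) + E))` minimizes the energy with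
density `ψ'² / 2 + F(ψ)` among absolutely continuous functions with the same boundary values. -/
theorem integral_energy_le_of_deriv_eq_sqrt {F : ℝ → ℝ} (hF : Continuous F) {E : ℝ}
    (hFE : ∀ u, 0 ≤ F u + E) {a b : ℝ} (hab : a ≤ b) {φ : ℝ → ℝ}
    (hφ : ∀ x ∈ Icc a b, HasDerivAt φ (√(2 * (F (φ x) + E))) x)
    {ψ g : ℝ → ℝ} (hg : IntervalIntegrable g volume a b)
    (hg2 : IntervalIntegrable (fun s => g s ^ 2) volume a b)
    (hψ : ∀ x ∈ Icc a b, ψ x = ψ a + ∫ s in a..x, g s) (ha : ψ a = φ a) (hb : ψ b = φ b) :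
    ∫ s in a..b, ((deriv φ s) ^ 2 / 2 + F (φ s)) ≤ ∫ s in a..b, (g s ^ 2 / 2 + F (ψ s)) := by
  set h : ℝ → ℝ := fun u => √(2 * (F u + E)) with hh
  have hhc : Continuous h := by fun_prop
  have hhsq (u : ℝ) : h u ^ 2 = 2 * (F u + E) := Real.sq_sqrt (by linarith [hFE u])
  have hu : uIcc a b = Icc a b := uIcc_of_le hab
  have hφc : ContinuousOn φ (uIcc a b) := fun x hx =>
    (hφ x (hu ▸ hx)).continuousAt.continuousWithinAt
  have hψc : ContinuousOn ψ (uIcc a b) := by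
    have h1 : ContinuousOn (fun x => ψ a + ∫ s in a..x, g s) (uIcc a b) :=
      continuousOn_const.add
        (hg.absolutelyContinuousOnInterval_intervalIntegral (c := a) (by simp)).continuousOn
    exact h1.congr fun x hx => hψ x (hu ▸ hx)
  have hφint : ∫ s in a..b, h (φ s) * h (φ s) = ∫ u in φ a..φ b, h u :=
    intervalIntegral.integral_comp_mul_deriv (g := h) (fun x hx => hφ x (hu ▸ hx))
      (hhc.comp_continuousOn hφc) hhc
  have hψint : ∫ s in a..b, h (ψ s) * g s = ∫ u in φ a..φ b, h u := by
    rw [← ha, ← hb, hψ b (right_mem_Icc.2 hab), ← integral_comp_primitive_mul hhc hg (ψ a)]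
    refine intervalIntegral.integral_congr fun x hx => ?_
    simp only [hψ x (hu ▸ hx)]
  have hleft : ∫ s in a..b, ((deriv φ s) ^ 2 / 2 + F (φ s)) =
      ∫ s in a..b, (h (φ s) * h (φ s) - E) := by
    refine intervalIntegral.integral_congr fun x hx => ?_
    have h1 : deriv φ x = h (φ x) := (hφ x (hu ▸ hx)).deriv
    simp only [h1]
    linarith [hhsq (φ x)]
  have hψg : IntervalIntegrable (fun s => h (ψ s) * g s) volume a b :=
    hg.continuousOn_mul (hhc.comp_continuousOn hψc)
  calc ∫ s in a..b, ((deriv φ s) ^ 2 / 2 + F (φ s))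
      = ∫ s in a..b, (h (ψ s) * g s - E) := by
        rw [hleft, intervalIntegral.integral_sub _ intervalIntegrable_const,
          intervalIntegral.integral_sub hψg intervalIntegrable_const, hφint, hψint]
        exact ((hhc.comp_continuousOn hφc).mul (hhc.comp_continuousOn hφc)).intervalIntegrable
    _ ≤ ∫ s in a..b, (g s ^ 2 / 2 + F (ψ s)) := by
        refine intervalIntegral.integral_mono_on hab (hψg.sub intervalIntegrable_const)
          ((hg2.div_const 2).add (hF.comp_continuousOn hψc).intervalIntegrable) fun x _ => ?_
        nlinarith [sq_nonneg (h (ψ x) - g x), hhsq (ψ x)]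

/-- Positive solutions starting from `0` of `φ'' = f(φ)` with `F' = f`, `F > 0`, solve
`φ' = √(2 (F(φ) + E))` for some `E ≥ 0`. -/
theorem exists_deriv_eq_sqrt_of_isBVPSol {Q d : ℝ} (hQ : 0 < Q) (hd : 0 < d) {f F φ : ℝ → ℝ}
    (hF : ContinuousAt F 0) (hF0 : F 0 = 0) (hFpos : ∀ u ∈ Ioo 0 Q, 0 < F u)
    (hFf : ∀ u ∈ Ioo 0 Q, HasDerivAt F (f u) u) (hφ : IsBVPSol Q f d φ) :
    ∃ E, 0 ≤ E ∧ ∀ x ∈ Ioo 0 d,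
      0 < √(2 * (F (φ x) + E)) ∧ HasDerivAt φ (√(2 * (F (φ x) + E))) x := by
  obtain ⟨hC1, hC2, hode, hφ0, hφd, hrange⟩ := hφ
  have hdiff (x) (hx : x ∈ Ioo 0 d) : HasDerivAt φ (deriv φ x) x :=
    ((hC2.contDiffAt (isOpen_Ioo.mem_nhds hx)).differentiableAt (by norm_num)).hasDerivAt
  have hdiff2 (x) (hx : x ∈ Ioo 0 d) : HasDerivAt (deriv φ) (f (φ x)) x := by
    rw [← hode x hx]
    have h1 : ContDiffOn ℝ 1 (deriv φ) (Ioo 0 d) :=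
      ((contDiffOn_succ_iff_deriv_of_isOpen (n := 1) isOpen_Ioo).1
        (by simpa [one_add_one_eq_two] using hC2)).2.2
    exact ((h1.contDiffAt (isOpen_Ioo.mem_nhds hx)).differentiableAt (by norm_num)).hasDerivAt
  obtain ⟨E, hE⟩ : ∃ E, ∀ x ∈ Ioo 0 d, deriv φ x ^ 2 / 2 - F (φ x) = E := by
    have hder (x) (hx : x ∈ Ioo 0 d) :
        HasDerivAt (fun x => deriv φ x ^ 2 / 2 - F (φ x)) 0 x := by
      have h1 := (((hdiff2 x hx).pow 2).div_const 2).sub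
        ((hFf _ (hrange x hx)).comp x (hdiff x hx))
      convert! h1 using 1
      simp; ring
    exact isOpen_Ioo.exists_is_const_of_deriv_eq_zero isPreconnected_Ioo
      (fun x hx => (hder x hx).differentiableAt.differentiableWithinAt)
      fun x hx => (hder x hx).deriv
  have hE0 : 0 ≤ E := by
    have hφc : Filter.Tendsto φ (nhdsWithin 0 (Ioo 0 d)) (nhds 0) := by
      have h1 := (hC1.continuousOn 0 (left_mem_Icc.2 hd.le)).mono Ioo_subset_Icc_self
      rwa [ContinuousWithinAt, hφ0] at h1
    have hlim : Filter.Tendsto (fun x => -F (φ x)) (nhdsWithin 0 (Ioo 0 d)) (nhds 0) := by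
      have h1 : Filter.Tendsto F (nhds 0) (nhds 0) := by
        simpa [ContinuousAt, hF0] using hF
      simpa using (h1.comp hφc).neg
    have : (nhdsWithin (0 : ℝ) (Ioo 0 d)).NeBot := by
      rw [nhdsWithin_Ioo_eq_nhdsGT hd]; infer_instance
    refine le_of_tendsto hlim ?_
    filter_upwards [self_mem_nhdsWithin] with x hx
    linarith [hE x hx, sq_nonneg (deriv φ x)]
  have hpos (x) (hx : x ∈ Ioo 0 d) : 0 < F (φ x) + E := by
    linarith [hFpos _ (hrange x hx)]
  have hne (x) (hx : x ∈ Ioo 0 d) : deriv φ x ≠ 0 := by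
    intro h0
    have := hE x hx
    rw [h0] at this
    linarith [hpos x hx]
  have hderpos : ∀ x ∈ Ioo 0 d, 0 < deriv φ x := by
    refine (hasDerivWithinAt_forall_lt_or_forall_gt_of_forall_ne (convex_Ioo 0 d)
      (fun x hx => (hdiff x hx).hasDerivWithinAt) hne).resolve_left fun hneg => ?_
    have hanti : StrictAntiOn φ (Icc 0 d) :=
      strictAntiOn_of_deriv_neg (convex_Icc 0 d) hC1.continuousOn (by simpa using hneg)
    have := hanti (left_mem_Icc.2 hd.le) (right_mem_Icc.2 hd.le) hd
    linarith
  refine ⟨E, hE0, fun x hx => ⟨Real.sqrt_pos.2 (by linarith [hpos x hx]), ?_⟩⟩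
  have h1 : √(2 * (F (φ x) + E)) = deriv φ x := by
    rw [show 2 * (F (φ x) + E) = deriv φ x ^ 2 by linarith [hE x hx],
      Real.sqrt_sq (hderpos x hx).le]
  exact h1 ▸ hdiff x hx

section Potential

variable {Q : ℝ}

theorem smoothstep_image_Icc (hQ : 0 < Q) :
    (fun t : ℝ => Q * (3 * t ^ 2 - 2 * t ^ 3)) '' Icc 0 1 = Icc 0 Q := by
  refine Subset.antisymm ?_ ?_
  · rintro _ ⟨t, ⟨h0, h1⟩, rfl⟩
    refine ⟨mul_nonneg hQ.le (by nlinarith [sq_nonneg t]), ?_⟩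
    have : 3 * t ^ 2 - 2 * t ^ 3 ≤ 1 := by
      nlinarith [mul_nonneg (sq_nonneg (1 - t)) h0, sq_nonneg (1 - t)]
    simpa using mul_le_mul_of_nonneg_left this hQ.le
  · have h := intermediate_value_Icc (f := fun t : ℝ => Q * (3 * t ^ 2 - 2 * t ^ 3))
      zero_le_one (by fun_prop)
    norm_num at h
    simpa using h

theorem continuousOn_of_leftInverse_smoothstep (hQ : 0 < Q) {κ : ℝ → ℝ}
    (hκ : ∀ t ∈ Icc (0 : ℝ) 1, κ (Q * (3 * t ^ 2 - 2 * t ^ 3)) = t) :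
    ContinuousOn κ (Icc 0 Q) := by
  set p : ℝ → ℝ := fun t => Q * (3 * t ^ 2 - 2 * t ^ 3) with hp
  have hpc : Continuous p := by fun_prop
  have himage : p '' Icc 0 1 = Icc 0 Q := smoothstep_image_Icc hQ
  refine continuousOn_iff_isClosed.2 fun C hC =>
    ⟨p '' (Icc 0 1 ∩ C), ((isCompact_Icc.inter_right hC).image hpc).isClosed, ?_⟩
  ext s
  constructor
  · rintro ⟨hsC, hs⟩
    obtain ⟨t, ht, rfl⟩ := himage ▸ hs
    refine ⟨⟨t, ⟨ht, ?_⟩, rfl⟩, hs⟩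
    rwa [mem_preimage, hκ t ht] at hsC
  · rintro ⟨⟨t, ⟨ht, htC⟩, rfl⟩, hs⟩
    refine ⟨?_, hs⟩
    rwa [mem_preimage, hκ t ht]

theorem integral_smoothstep_force (hQ : 0 < Q) {κ f : ℝ → ℝ}
    (hκ : ∀ t ∈ Icc (0 : ℝ) 1, κ (Q * (3 * t ^ 2 - 2 * t ^ 3)) = t)
    (hf : ∀ s, f s = 6 * Q * (1 - 2 * κ s)) (hfc : ContinuousOn f (Icc 0 Q))
    {t : ℝ} (ht : t ∈ Icc (0 : ℝ) 1) :
    ∫ s in (0 : ℝ)..(Q * (3 * t ^ 2 - 2 * t ^ 3)), indicator (Icc 0 Q) f s =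
      18 * Q ^ 2 * (t * (1 - t)) ^ 2 := by
  set p : ℝ → ℝ := fun t => Q * (3 * t ^ 2 - 2 * t ^ 3) with hp
  have himage : p '' Icc 0 1 = Icc 0 Q := smoothstep_image_Icc hQ
  have hsub : uIcc 0 t ⊆ Icc 0 1 := by
    rw [uIcc_of_le ht.1]; exact Icc_subset_Icc_right ht.2
  have hder (x : ℝ) : HasDerivAt p (Q * (6 * x - 6 * x ^ 2)) x := by
    have h1 := (((hasDerivAt_pow 2 x).const_mul 3).sub
      ((hasDerivAt_pow 3 x).const_mul 2)).const_mul Q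
    convert! h1 using 1
    push_cast; ring
  have hmem : p t ∈ Icc 0 Q := himage ▸ mem_image_of_mem p ht
  have hfc' : ContinuousOn f (p '' uIcc 0 t) :=
    hfc.mono (himage ▸ image_mono hsub)
  have hcv := intervalIntegral.integral_comp_mul_deriv'' (a := 0) (b := t) (f := p)
    (f' := fun x => Q * (6 * x - 6 * x ^ 2)) (g := f) (by fun_prop)
    (fun x _ => (hder x).hasDerivWithinAt) (by fun_prop) hfc'
  have hp0 : p 0 = 0 := by simp [hp]
  have hind : ∫ s in (0 : ℝ)..p t, indicator (Icc 0 Q) f s = ∫ s in p 0..p t, f s := by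
    rw [hp0]
    refine intervalIntegral.integral_congr fun s hs => ?_
    rw [uIcc_of_le hmem.1] at hs
    have hsQ : s ∈ Icc 0 Q := ⟨hs.1, hs.2.trans hmem.2⟩
    exact indicator_of_mem hsQ f
  change ∫ s in (0 : ℝ)..p t, indicator (Icc 0 Q) f s = _
  rw [hind, ← hcv]
  have hprim (x : ℝ) : HasDerivAt (fun x => 18 * Q ^ 2 * (x * (1 - x)) ^ 2)
      (6 * Q * (1 - 2 * x) * (Q * (6 * x - 6 * x ^ 2))) x := by
    have h1 := (((hasDerivAt_id x).mul ((hasDerivAt_id x).const_sub 1)).pow 2).const_mul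
      (18 * Q ^ 2)
    convert! h1 using 1
    simp; ring
  have hcongr : ∫ x in (0 : ℝ)..t, (f ∘ p) x * (Q * (6 * x - 6 * x ^ 2)) =
      ∫ x in (0 : ℝ)..t, 6 * Q * (1 - 2 * x) * (Q * (6 * x - 6 * x ^ 2)) := by
    refine intervalIntegral.integral_congr fun x hx => ?_
    simp only [Function.comp, hf, hp, hκ x (hsub hx)]
  rw [hcongr, intervalIntegral.integral_eq_sub_of_hasDerivAt (fun x _ => hprim x)
    (Continuous.intervalIntegrable (by fun_prop) _ _)]
  simp

end Potential

/-- `φ̄_d` is a local energy minimizer: for `0 < d' < d'' < d` and any absolutely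
continuous competitor `ψ` on `[d',d'']` (indefinite integral of `g ∈ L²(d',d'')`)
with the same boundary values, the energy of `φ̄_d` on `(d',d'')` is no larger. -/
theorem stmt14
    (Q : ℝ) (hQ : 0 < Q)
    (κ : ℝ → ℝ) (hκ : ∀ t ∈ Set.Icc (0 : ℝ) 1, κ (Q * (3 * t ^ 2 - 2 * t ^ 3)) = t)
    (f : ℝ → ℝ) (hf : ∀ s : ℝ, f s = 6 * Q * (1 - 2 * κ s))
    (F : ℝ → ℝ) (hF : ∀ t : ℝ, F t = ∫ s in (0 : ℝ)..t, Set.indicator (Set.Icc 0 Q) f s)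
    (d : ℝ) (hd : d ∈ Set.Ioc (0 : ℝ) 1)
    (φd : ℝ → ℝ) (hφd : IsBVPSol Q f d φd)
    (d' d'' : ℝ) (hd' : 0 < d') (hd'd'' : d' < d'') (hd'' : d'' < d) :
    ∀ ψ g : ℝ → ℝ,
      MeasureTheory.IntegrableOn (fun s => (g s) ^ 2) (Set.Icc d' d'') volume →
      (∀ x ∈ Set.Icc d' d'', ψ x = ψ d' + ∫ s in d'..x, g s) →
      ψ d' = φd d' → ψ d'' = φd d'' →
      (∫ s in d'..d'', ((deriv φd s) ^ 2 / 2 + F (φd s))) ≤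
        ∫ s in d'..d'', ((g s) ^ 2 / 2 + F (ψ s)) := by
  intro ψ g hg2 hψ hψa hψb
  have hfc : ContinuousOn f (Icc 0 Q) := by
    rw [show f = fun s => 6 * Q * (1 - 2 * κ s) from funext hf]
    have := continuousOn_of_leftInverse_smoothstep hQ hκ
    fun_prop
  have hint : Integrable (indicator (Icc 0 Q) f) :=
    (hfc.integrableOn_compact isCompact_Icc).integrable_indicator measurableSet_Icc
  have hFeq : F = fun t => ∫ s in (0 : ℝ)..t, indicator (Icc 0 Q) f s := funext hF
  have hFc : Continuous F :=
    hFeq ▸ intervalIntegral.continuous_primitive (fun _ _ => hint.intervalIntegrable) 0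
  have hFval (t : ℝ) (ht : t ∈ Icc (0 : ℝ) 1) :
      F (Q * (3 * t ^ 2 - 2 * t ^ 3)) = 18 * Q ^ 2 * (t * (1 - t)) ^ 2 := by
    rw [hF, integral_smoothstep_force hQ hκ hf hfc ht]
  have hF0 : F 0 = 0 := by simp [hF]
  have hFpos : ∀ u ∈ Ioo 0 Q, 0 < F u := by
    intro u hu
    obtain ⟨t, ht, rfl⟩ := (smoothstep_image_Icc hQ).symm ▸ Ioo_subset_Icc_self hu
    have h0 : t ≠ 0 := by rintro rfl; norm_num at hu
    have h1 : 1 - t ≠ 0 := by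
      intro h
      obtain rfl : t = 1 := by linarith
      norm_num at hu
    simp only [hFval t ht]
    positivity
  have hFQ : F Q = 0 := by
    have := hFval 1 (by norm_num)
    norm_num at this
    exact this
  have hFnonneg (u : ℝ) : 0 ≤ F u := by
    rcases le_or_gt u 0 with hu0 | hu0
    · refine le_of_eq ?_
      rw [hF, intervalIntegral.integral_symm, intervalIntegral.integral_zero_ae, neg_zero]
      filter_upwards [Measure.ae_ne volume 0] with s hs hsu
      rw [uIoc_of_le hu0] at hsu
      exact indicator_of_notMem (fun h => hs (le_antisymm hsu.2 h.1)) f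
    rcases lt_or_ge u Q with huQ | huQ
    · exact (hFpos u ⟨hu0, huQ⟩).le
    · refine le_of_eq ?_
      rw [hF, ← intervalIntegral.integral_add_adjacent_intervals (b := Q)
        hint.intervalIntegrable hint.intervalIntegrable, ← hF, hFQ, zero_add,
        intervalIntegral.integral_zero_ae]
      filter_upwards with s hsu
      rw [uIoc_of_le huQ] at hsu
      exact indicator_of_notMem (fun h => absurd h.2 (not_le.2 hsu.1)) f
  have hFf : ∀ u ∈ Ioo 0 Q, HasDerivAt F (f u) u := by
    intro u hu
    have hnhds : Icc 0 Q ∈ nhds u := Icc_mem_nhds hu.1 hu.2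
    have hcont : ContinuousAt (indicator (Icc 0 Q) f) u :=
      (hfc.continuousAt hnhds).congr
        (Filter.mem_of_superset hnhds fun s hs => (indicator_of_mem hs f).symm)
    have h1 := intervalIntegral.integral_hasDerivAt_right (a := 0) hint.intervalIntegrable
      (hint.aestronglyMeasurable.stronglyMeasurableAtFilter) hcont
    rwa [indicator_of_mem (Ioo_subset_Icc_self hu), ← hFeq] at h1
  obtain ⟨E, hE, hφ⟩ :=
    exists_deriv_eq_sqrt_of_isBVPSol hQ hd.1 hFc.continuousAt hF0 hFpos hFf hφd
  have hsub : Icc d' d'' ⊆ Ioo 0 d := fun x hx => ⟨hd'.trans_le hx.1, hx.2.trans_lt hd''⟩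
  have hmono : StrictMonoOn φd (Icc d' d'') := by
    refine strictMonoOn_of_deriv_pos (convex_Icc _ _)
      (fun x hx => (hφ x (hsub hx)).2.continuousAt.continuousWithinAt) fun x hx => ?_
    have h1 := hφ x (hsub (interior_subset hx))
    rw [h1.2.deriv]
    exact h1.1
  have hlt := hmono (left_mem_Icc.2 hd'd''.le) (right_mem_Icc.2 hd'd''.le) hd'd''
  -- The integral of `g` is nonzero, so `g` is integrable.
  have hg : IntervalIntegrable g volume d' d'' := by
    by_contra hng
    have h1 := hψ d'' (right_mem_Icc.2 hd'd''.le)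
    rw [intervalIntegral.integral_undef hng] at h1
    linarith
  exact integral_energy_le_of_deriv_eq_sqrt hFc (fun u => add_nonneg (hFnonneg u) hE) hd'd''.le
    (fun x hx => (hφ x (hsub hx)).2) hg
    ((intervalIntegrable_iff_integrableOn_Icc_of_le hd'd''.le).2 hg2) hψ hψa hψb
end
end

section
/- Let d∈(0,1]. For every ε>0 there exists σ>0 such that every ψ∈U_d with sup_{x₂∈[0,d]}|ψ(x₂)−φ̄_d(x₂)|>ε satisfies J_d(ψ) ≥ J_d(φ̄_d)+σ. -/
open Real Set MeasureTheory

noncomputable section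

/-- `ψ ∈ U_d` with a.e. derivative `g`. -/
def UdRep (Q d : ℝ) (ψ g : ℝ → ℝ) : Prop :=
  MeasureTheory.IntegrableOn (fun s => (g s) ^ 2) (Set.Icc (0 : ℝ) d) volume ∧
  (∀ x ∈ Set.Icc (0 : ℝ) d, ψ x = ∫ s in (0 : ℝ)..x, g s) ∧ ψ d = Q

/-- The energy `J_d(ψ) = ∫₀^d (|ψ'|²/2 + F(ψ))` computed with a.e. derivative `g`. -/
def Jd (F : ℝ → ℝ) (d : ℝ) (ψ g : ℝ → ℝ) : ℝ :=
  ∫ s in (0 : ℝ)..d, ((g s) ^ 2 / 2 + F (ψ s))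

open Filter Topology

/-- Chain rule for the primitive of an integrable function, in integrated form. -/
lemma integral_comp_mul_eq_sub {G G' ψ g : ℝ → ℝ} {d C x y : ℝ}
    (hG : ∀ t, HasDerivAt G (G' t) t) (hC : ∀ t, |G' t| ≤ C)
    (hg : IntervalIntegrable g volume 0 d)
    (hψ : ∀ x ∈ Icc (0 : ℝ) d, ψ x = ∫ s in (0 : ℝ)..x, g s)
    (hx : 0 ≤ x) (hxy : x ≤ y) (hy : y ≤ d) :
    ∫ s in x..y, G' (ψ s) * g s = G (ψ y) - G (ψ x) := by
  have hd : 0 ≤ d := hx.trans (hxy.trans hy)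
  have hlip : LipschitzWith C.toNNReal G := by
    refine lipschitzWith_of_nnnorm_deriv_le (fun t => (hG t).differentiableAt) fun t => ?_
    rw [(hG t).deriv, ← NNReal.coe_le_coe, coe_nnnorm]
    exact (hC t).trans (Real.le_coe_toNNReal C)
  set u : ℝ → ℝ := fun x => ∫ s in (0 : ℝ)..x, g s with hu
  have hsub : uIcc x y ⊆ uIcc 0 d := by
    rw [uIcc_of_le hxy, uIcc_of_le hd]; exact Icc_subset_Icc hx hy
  have hac : AbsolutelyContinuousOnInterval u x y :=
    (hg.absolutelyContinuousOnInterval_intervalIntegral left_mem_uIcc).mono hsub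
  have hGac : AbsolutelyContinuousOnInterval (fun s => G (u s)) x y := by
    have h := Tendsto.const_mul (C.toNNReal : ℝ) hac
    rw [mul_zero] at h
    refine squeeze_zero (fun E => Finset.sum_nonneg fun i _ => dist_nonneg) (fun E => ?_) h
    rw [Finset.mul_sum]
    exact Finset.sum_le_sum fun i _ => hlip.dist_le_mul _ _
  have h := hGac.integral_deriv_eq_sub
  rw [hψ x ⟨hx, hxy.trans hy⟩, hψ y ⟨hx.trans hxy, hy⟩]
  refine Eq.trans ?_ h
  refine intervalIntegral.integral_congr_ae ?_
  filter_upwards [hg.ae_hasDerivAt_integral] with s hs hsxy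
  have hs' : s ∈ uIcc 0 d := hsub (uIoc_subset_uIcc hsxy)
  have hderiv : HasDerivAt (fun s => G (u s)) (G' (u s) * g s) s :=
    (hG (u s)).comp s (hs hs' 0 left_mem_uIcc)
  rw [hderiv.deriv, hψ s (by rwa [uIcc_of_le hd] at hs')]

/-- A member of `U_d` has an integrable derivative. -/
lemma UdRep.intervalIntegrable {Q d : ℝ} {ψ g : ℝ → ℝ} (h : UdRep Q d ψ g) (hQ : 0 < Q)
    (hd : 0 ≤ d) : IntervalIntegrable g volume 0 d := by
  by_contra hg
  have h1 := h.2.1 d ⟨hd, le_rfl⟩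
  rw [intervalIntegral.integral_undef hg, h.2.2] at h1
  exact hQ.ne' h1

lemma UdRep.continuousOn {Q d : ℝ} {ψ g : ℝ → ℝ} (h : UdRep Q d ψ g) (hQ : 0 < Q)
    (hd : 0 ≤ d) : ContinuousOn ψ (Icc 0 d) := by
  have h1 := ((h.intervalIntegrable hQ hd).absolutelyContinuousOnInterval_intervalIntegral
    left_mem_uIcc).continuousOn
  rw [uIcc_of_le hd] at h1
  exact h1.congr h.2.1

lemma UdRep.apply_zero {Q d : ℝ} {ψ g : ℝ → ℝ} (h : UdRep Q d ψ g) (hd : 0 ≤ d) : ψ 0 = 0 := by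
  rw [h.2.1 0 ⟨le_rfl, hd⟩, intervalIntegral.integral_same]

section Potential

variable {Q : ℝ} {κ f F : ℝ → ℝ}

/-- The cubic `t ↦ Q (3 t² - 2 t³)` maps `[0,1]` into `[0,Q]`. -/
lemma cubic_mem_Icc (hQ : 0 < Q) {t : ℝ} (ht : t ∈ Icc (0 : ℝ) 1) :
    Q * (3 * t ^ 2 - 2 * t ^ 3) ∈ Icc 0 Q := by
  obtain ⟨h0, h1⟩ := ht
  constructor
  · exact mul_nonneg hQ.le (by nlinarith [sq_nonneg t])
  · have : 3 * t ^ 2 - 2 * t ^ 3 ≤ 1 := by nlinarith [sq_nonneg (t - 1)]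
    nlinarith

lemma exists_cubic_eq {s : ℝ} (hs : s ∈ Icc 0 Q) :
    ∃ t ∈ Icc (0 : ℝ) 1, Q * (3 * t ^ 2 - 2 * t ^ 3) = s := by
  have hc : ContinuousOn (fun t : ℝ => Q * (3 * t ^ 2 - 2 * t ^ 3)) (Icc 0 1) := by fun_prop
  have h := intermediate_value_Icc zero_le_one hc
  have hs' : s ∈ Icc (Q * (3 * (0 : ℝ) ^ 2 - 2 * 0 ^ 3)) (Q * (3 * (1 : ℝ) ^ 2 - 2 * 1 ^ 3)) := by
    constructor <;> norm_num <;> linarith [hs.1, hs.2]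
  exact h hs'

lemma continuousOn_cubic_inverse
    (hκ : ∀ t ∈ Icc (0 : ℝ) 1, κ (Q * (3 * t ^ 2 - 2 * t ^ 3)) = t) :
    ContinuousOn κ (Icc 0 Q) := by
  rw [continuousOn_iff_isClosed]
  intro A hA
  refine ⟨(fun t : ℝ => Q * (3 * t ^ 2 - 2 * t ^ 3)) '' (Icc 0 1 ∩ A),
    ((isCompact_Icc.inter_right hA).image (by fun_prop)).isClosed, ?_⟩
  ext s
  constructor
  · rintro ⟨hsA, hs⟩
    obtain ⟨t, ht, rfl⟩ := exists_cubic_eq hs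
    refine ⟨⟨t, ⟨ht, ?_⟩, rfl⟩, hs⟩
    rwa [mem_preimage, hκ t ht] at hsA
  · rintro ⟨⟨t, ⟨ht, htA⟩, rfl⟩, hs⟩
    refine ⟨?_, hs⟩
    rwa [mem_preimage, hκ t ht]

lemma continuousOn_force
    (hκ : ∀ t ∈ Icc (0 : ℝ) 1, κ (Q * (3 * t ^ 2 - 2 * t ^ 3)) = t)
    (hf : ∀ s : ℝ, f s = 6 * Q * (1 - 2 * κ s)) : ContinuousOn f (Icc 0 Q) := by
  have h := continuousOn_cubic_inverse hκ
  rw [show f = fun s => 6 * Q * (1 - 2 * κ s) from funext hf]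
  fun_prop

lemma integrable_indicator_force (hfc : ContinuousOn f (Icc 0 Q)) :
    Integrable (indicator (Icc 0 Q) f) :=
  (integrable_indicator_iff measurableSet_Icc).2 hfc.integrableOn_Icc

lemma potential_cubic (hQ : 0 < Q)
    (hκ : ∀ t ∈ Icc (0 : ℝ) 1, κ (Q * (3 * t ^ 2 - 2 * t ^ 3)) = t)
    (hf : ∀ s : ℝ, f s = 6 * Q * (1 - 2 * κ s))
    (hF : ∀ t : ℝ, F t = ∫ s in (0 : ℝ)..t, indicator (Icc 0 Q) f s)
    {t : ℝ} (ht : t ∈ Icc (0 : ℝ) 1) :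
    F (Q * (3 * t ^ 2 - 2 * t ^ 3)) = 18 * Q ^ 2 * (t * (1 - t)) ^ 2 := by
  have hfc := continuousOn_force hκ hf
  set q : ℝ → ℝ := fun t => Q * (3 * t ^ 2 - 2 * t ^ 3) with hq
  have hmem : ∀ u ∈ uIcc 0 t, u ∈ Icc (0 : ℝ) 1 := by
    intro u hu
    rw [uIcc_of_le ht.1] at hu
    exact ⟨hu.1, hu.2.trans ht.2⟩
  have hqd : ∀ u, HasDerivAt q (Q * (6 * u - 6 * u ^ 2)) u := by
    intro u
    have := (((hasDerivAt_pow 2 u).const_mul 3).sub ((hasDerivAt_pow 3 u).const_mul 2)).const_mul Q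
    refine this.congr_deriv ?_
    push_cast
    ring
  have hsubst := intervalIntegral.integral_comp_mul_deriv'' (a := 0) (b := t) (f := q)
    (f' := fun u => Q * (6 * u - 6 * u ^ 2)) (g := indicator (Icc 0 Q) f)
    (by fun_prop) (fun u _ => (hqd u).hasDerivWithinAt) (by fun_prop) (by
      have hsub : q '' uIcc 0 t ⊆ Icc 0 Q := by
        rintro _ ⟨u, hu, rfl⟩
        exact cubic_mem_Icc hQ (hmem u hu)
      exact (hfc.mono hsub).congr fun s hs => indicator_of_mem (hsub hs) f)
  have hq0 : q 0 = 0 := by simp [hq]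
  rw [hF]
  rw [hq0] at hsubst
  rw [← hsubst]
  have hprim : ∀ u, HasDerivAt (fun u : ℝ => 18 * Q ^ 2 * (u * (1 - u)) ^ 2)
      (6 * Q * (1 - 2 * u) * (Q * (6 * u - 6 * u ^ 2))) u := by
    intro u
    have h1 := (((hasDerivAt_id u).mul ((hasDerivAt_id u).const_sub 1)).pow 2).const_mul
      (18 * Q ^ 2)
    refine h1.congr_deriv ?_
    simp
    ring
  have hint : ∫ u in (0 : ℝ)..t, 6 * Q * (1 - 2 * u) * (Q * (6 * u - 6 * u ^ 2))
      = 18 * Q ^ 2 * (t * (1 - t)) ^ 2 := by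
    rw [intervalIntegral.integral_eq_sub_of_hasDerivAt (fun u _ => hprim u)
      (Continuous.intervalIntegrable (by fun_prop) _ _)]
    ring
  rw [← hint]
  refine intervalIntegral.integral_congr fun u hu => ?_
  have hu' := hmem u hu
  simp only [Function.comp]
  rw [indicator_of_mem (cubic_mem_Icc hQ hu'), hf, hκ u hu']

lemma continuous_potential (hfc : ContinuousOn f (Icc 0 Q))
    (hF : ∀ t : ℝ, F t = ∫ s in (0 : ℝ)..t, indicator (Icc 0 Q) f s) : Continuous F := by
  rw [show F = fun t => ∫ s in (0 : ℝ)..t, indicator (Icc 0 Q) f s from funext hF]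
  exact intervalIntegral.continuous_primitive
    (fun _ _ => (integrable_indicator_force hfc).intervalIntegrable) 0

lemma hasDerivAt_potential (hfc : ContinuousOn f (Icc 0 Q))
    (hF : ∀ t : ℝ, F t = ∫ s in (0 : ℝ)..t, indicator (Icc 0 Q) f s)
    {t : ℝ} (ht : t ∈ Ioo 0 Q) : HasDerivAt F (f t) t := by
  have hint := integrable_indicator_force hfc
  rw [show F = fun t => ∫ s in (0 : ℝ)..t, indicator (Icc 0 Q) f s from funext hF]
  have hnhds : Icc 0 Q ∈ 𝓝 t := Icc_mem_nhds ht.1 ht.2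
  have hcont : ContinuousAt (indicator (Icc 0 Q) f) t :=
    (hfc.continuousAt hnhds).congr
      (Filter.eventuallyEq_of_mem hnhds fun s hs => (indicator_of_mem hs f).symm)
  have h := intervalIntegral.integral_hasDerivAt_right (a := 0) hint.intervalIntegrable
    (hint.aestronglyMeasurable.stronglyMeasurableAtFilter) hcont
  rwa [indicator_of_mem (Ioo_subset_Icc_self ht)] at h

lemma potential_eq_zero (hQ : 0 < Q)
    (hκ : ∀ t ∈ Icc (0 : ℝ) 1, κ (Q * (3 * t ^ 2 - 2 * t ^ 3)) = t)
    (hf : ∀ s : ℝ, f s = 6 * Q * (1 - 2 * κ s))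
    (hF : ∀ t : ℝ, F t = ∫ s in (0 : ℝ)..t, indicator (Icc 0 Q) f s)
    {t : ℝ} (ht : t ∉ Icc 0 Q) : F t = 0 := by
  have hint := integrable_indicator_force (continuousOn_force hκ hf)
  rcases lt_or_ge t 0 with h | h
  · rw [hF, intervalIntegral.integral_symm, neg_eq_zero]
    refine intervalIntegral.integral_zero_ae ?_
    have h0 : ∀ᵐ x : ℝ, x ≠ 0 := by simp [ae_iff, measure_singleton]
    filter_upwards [h0] with x hx0 hx
    rw [uIoc_of_le h.le] at hx
    exact indicator_of_notMem (fun hx' => hx0 (le_antisymm hx.2 hx'.1)) f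
  · have hQt : Q < t := by
      by_contra hc
      exact ht ⟨h, not_lt.1 hc⟩
    have hFQ : F Q = 0 := by
      have := potential_cubic hQ hκ hf hF (t := 1) (by simp)
      norm_num at this
      exact this
    rw [hF, ← intervalIntegral.integral_add_adjacent_intervals (b := Q) hint.intervalIntegrable
      hint.intervalIntegrable, ← hF, hFQ, zero_add]
    refine intervalIntegral.integral_zero_ae (ae_of_all _ fun x hx => ?_)
    rw [uIoc_of_le hQt.le] at hx
    exact indicator_of_notMem (fun hx' => absurd hx.1 (not_lt.2 hx'.2)) f

lemma potential_bounds (hQ : 0 < Q)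
    (hκ : ∀ t ∈ Icc (0 : ℝ) 1, κ (Q * (3 * t ^ 2 - 2 * t ^ 3)) = t)
    (hf : ∀ s : ℝ, f s = 6 * Q * (1 - 2 * κ s))
    (hF : ∀ t : ℝ, F t = ∫ s in (0 : ℝ)..t, indicator (Icc 0 Q) f s) (t : ℝ) :
    0 ≤ F t ∧ F t ≤ 18 * Q ^ 2 := by
  by_cases ht : t ∈ Icc 0 Q
  · obtain ⟨u, hu, rfl⟩ := exists_cubic_eq ht
    rw [potential_cubic hQ hκ hf hF hu]
    refine ⟨by positivity, ?_⟩
    have h0 : 0 ≤ u * (1 - u) := mul_nonneg hu.1 (by linarith [hu.2])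
    have h1 : (u * (1 - u)) ^ 2 ≤ 1 := pow_le_one₀ h0 (by nlinarith [hu.1, hu.2])
    nlinarith [sq_nonneg Q]
  · rw [potential_eq_zero hQ hκ hf hF ht]
    exact ⟨le_rfl, by positivity⟩

lemma potential_pos (hQ : 0 < Q)
    (hκ : ∀ t ∈ Icc (0 : ℝ) 1, κ (Q * (3 * t ^ 2 - 2 * t ^ 3)) = t)
    (hf : ∀ s : ℝ, f s = 6 * Q * (1 - 2 * κ s))
    (hF : ∀ t : ℝ, F t = ∫ s in (0 : ℝ)..t, indicator (Icc 0 Q) f s)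
    {t : ℝ} (ht : t ∈ Ioo 0 Q) : 0 < F t := by
  obtain ⟨u, hu, rfl⟩ := exists_cubic_eq (Ioo_subset_Icc_self ht)
  rw [potential_cubic hQ hκ hf hF hu]
  have hu0 : u ≠ 0 := by rintro rfl; norm_num at ht
  have hu1 : 1 - u ≠ 0 := by
    intro h
    obtain rfl : u = 1 := by linarith
    norm_num at ht
  positivity

end Potential

/-- The speed `√(2 (F t + c))` of an orbit of energy `c` in the potential `-F`. -/
def orbitSpeed (F : ℝ → ℝ) (c t : ℝ) : ℝ := √(2 * (F t + c))

section Orbit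

variable {Q d c : ℝ} {f F φ ψ g : ℝ → ℝ}

lemma continuous_orbitSpeed (hF : Continuous F) : Continuous (orbitSpeed F c) := by
  unfold orbitSpeed
  fun_prop

lemma orbitSpeed_sq (hF : ∀ t, 0 ≤ F t) (hc : 0 ≤ c) (t : ℝ) :
    orbitSpeed F c t ^ 2 = 2 * (F t + c) :=
  Real.sq_sqrt (by linarith [hF t])

lemma orbitSpeed_nonneg (t : ℝ) : 0 ≤ orbitSpeed F c t := Real.sqrt_nonneg _

lemma orbitSpeed_le {M : ℝ} (hF : ∀ t, F t ≤ M) (t : ℝ) : orbitSpeed F c t ≤ √(2 * (M + c)) :=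
  Real.sqrt_le_sqrt (by linarith [hF t])

/-- A solution of the boundary value problem is increasing and conserves energy. -/
lemma IsBVPSol.exists_deriv_eq_orbitSpeed (h : IsBVPSol Q f d φ) (hQ : 0 < Q) (hd : 0 < d)
    (hFc : Continuous F) (hF0 : F 0 = 0) (hFpos : ∀ t ∈ Ioo 0 Q, 0 < F t)
    (hFd : ∀ t ∈ Ioo 0 Q, HasDerivAt F (f t) t) :
    ∃ c, 0 ≤ c ∧ ∀ x ∈ Ioo 0 d, deriv φ x = orbitSpeed F c (φ x) := by
  obtain ⟨h1, h2, hode, hφ0, hφd, hran⟩ := h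
  have hφc : ContinuousOn φ (Icc 0 d) := h1.continuousOn
  have hd1 : ContDiffOn ℝ 1 (deriv φ) (Ioo 0 d) :=
    h2.deriv_of_isOpen isOpen_Ioo (by norm_num)
  have hdiff : ∀ x ∈ Ioo 0 d, HasDerivAt φ (deriv φ x) x := fun x hx =>
    ((h2.differentiableOn (by norm_num)).differentiableAt (isOpen_Ioo.mem_nhds hx)).hasDerivAt
  have hdiff2 : ∀ x ∈ Ioo 0 d, HasDerivAt (deriv φ) (f (φ x)) x := fun x hx => by
    rw [← hode x hx]
    exact ((hd1.differentiableOn (by norm_num)).differentiableAt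
      (isOpen_Ioo.mem_nhds hx)).hasDerivAt
  have hE : ∀ x ∈ Ioo 0 d, HasDerivAt (fun x => deriv φ x ^ 2 / 2 - F (φ x)) 0 x := by
    intro x hx
    have ha := ((hdiff2 x hx).pow 2).div_const 2
    have hb := (hFd (φ x) (hran x hx)).comp x (hdiff x hx)
    refine (ha.sub hb).congr_deriv ?_
    norm_num
    ring
  have hmid : d / 2 ∈ Ioo 0 d := ⟨by linarith, by linarith⟩
  set c := deriv φ (d / 2) ^ 2 / 2 - F (φ (d / 2)) with hcdef
  have hconst : ∀ x ∈ Ioo 0 d, deriv φ x ^ 2 / 2 - F (φ x) = c := by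
    intro x hx
    exact (convex_Ioo (0 : ℝ) d).is_const_of_fderivWithin_eq_zero (𝕜 := ℝ)
      (fun y hy => (hE y hy).differentiableAt.differentiableWithinAt)
      (fun y hy => by
        rw [fderivWithin_of_isOpen isOpen_Ioo hy]
        ext
        simpa using (hE y hy).deriv) hx hmid
  have hc : 0 ≤ c := by
    have hlim : Tendsto (fun x => -F (φ x)) (𝓝[>] 0) (𝓝 (-F (φ 0))) := by
      have hw : ContinuousWithinAt φ (Ioi 0) 0 :=
        (hφc 0 ⟨le_rfl, hd.le⟩).mono_of_mem_nhdsWithin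
          (mem_of_superset (Ioo_mem_nhdsGT hd) Ioo_subset_Icc_self)
      exact ((hFc.tendsto _).comp hw).neg
    rw [hφ0, hF0, neg_zero] at hlim
    refine le_of_tendsto hlim ?_
    filter_upwards [Ioo_mem_nhdsGT hd] with x hx
    have := hconst x hx
    nlinarith [sq_nonneg (deriv φ x)]
  refine ⟨c, hc, ?_⟩
  have hne : ∀ x ∈ Ioo 0 d, deriv φ x ≠ 0 := by
    intro x hx h0
    have := hconst x hx
    rw [h0] at this
    have := hFpos _ (hran x hx)
    norm_num at *
    linarith
  obtain ⟨z, hz, hzeq⟩ := exists_deriv_eq_slope φ hd hφc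
    (h2.differentiableOn (by norm_num))
  have hzpos : 0 < deriv φ z := by
    rw [hzeq, hφ0, hφd]
    simp only [sub_zero]
    positivity
  intro x hx
  have hpos : 0 < deriv φ x := by
    by_contra hneg
    obtain ⟨w, hw, hw0⟩ := isPreconnected_Ioo.intermediate_value hx hz hd1.continuousOn
      (show (0 : ℝ) ∈ Icc _ _ from ⟨not_lt.1 hneg, hzpos.le⟩)
    exact hne w hw hw0
  rw [orbitSpeed, eq_comm, Real.sqrt_eq_iff_mul_self_eq_of_pos hpos]
  linarith [hconst x hx]

lemma UdRep.ae_eq_deriv (h : UdRep Q d ψ g) (hQ : 0 < Q) (hd : 0 ≤ d) :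
    ∀ᵐ x, x ∈ Ioo 0 d → g x = deriv ψ x := by
  filter_upwards [(h.intervalIntegrable hQ hd).ae_hasDerivAt_integral] with x hx hx'
  have hmem : x ∈ uIcc 0 d := by rw [uIcc_of_le hd]; exact Ioo_subset_Icc_self hx'
  have heq : ψ =ᶠ[𝓝 x] fun x => ∫ s in (0 : ℝ)..x, g s :=
    eventuallyEq_of_mem (isOpen_Ioo.mem_nhds hx') fun y hy => h.2.1 y (Ioo_subset_Icc_self hy)
  exact ((hx hmem 0 left_mem_uIcc).congr_of_eventuallyEq heq).deriv.symm

/-- Composites of members of `U_d` with continuous functions are integrable. -/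
lemma UdRep.comp_intervalIntegrable (h : UdRep Q d ψ g) (hQ : 0 < Q) (hd : 0 ≤ d)
    {G : ℝ → ℝ} (hG : Continuous G) :
    IntervalIntegrable (fun s => G (ψ s)) volume 0 d := by
  refine ContinuousOn.intervalIntegrable ?_
  rw [uIcc_of_le hd]
  exact hG.comp_continuousOn (h.continuousOn hQ hd)

lemma UdRep.comp_mul_intervalIntegrable (h : UdRep Q d ψ g) (hQ : 0 < Q) (hd : 0 ≤ d)
    {G : ℝ → ℝ} (hG : Continuous G) :
    IntervalIntegrable (fun s => G (ψ s) * g s) volume 0 d := by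
  refine (h.intervalIntegrable hQ hd).continuousOn_mul ?_
  rw [uIcc_of_le hd]
  exact hG.comp_continuousOn (h.continuousOn hQ hd)

lemma UdRep.sq_intervalIntegrable (h : UdRep Q d ψ g) (hd : 0 ≤ d) :
    IntervalIntegrable (fun s => g s ^ 2) volume 0 d :=
  (intervalIntegrable_iff_integrableOn_Icc_of_le hd).2 h.1

lemma UdRep.defect_intervalIntegrable (h : UdRep Q d ψ g) (hQ : 0 < Q) (hd : 0 ≤ d)
    {p : ℝ → ℝ} (hp : Continuous p) :
    IntervalIntegrable (fun s => (g s - p (ψ s)) ^ 2) volume 0 d := by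
  have h1 := (h.sq_intervalIntegrable hd).add
    (((h.comp_mul_intervalIntegrable hQ hd hp).const_mul (-2)).add
      (h.comp_intervalIntegrable hQ hd (hp.pow 2)))
  refine h1.congr fun s _ => ?_
  simp only [Pi.pow_apply]
  ring

/-- Calibration identity: the energy exceeds a constant by half the squared defect. -/
lemma UdRep.energy_eq (h : UdRep Q d ψ g) (hQ : 0 < Q) (hd : 0 ≤ d)
    (hFc : Continuous F) (hF : ∀ t, 0 ≤ F t) {M : ℝ} (hM : ∀ t, F t ≤ M) (hc : 0 ≤ c) :
    Jd F d ψ g = (∫ t in (0 : ℝ)..Q, orbitSpeed F c t) - c * d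
      + (∫ s in (0 : ℝ)..d, (g s - orbitSpeed F c (ψ s)) ^ 2) / 2 := by
  have hp : Continuous (orbitSpeed F c) := continuous_orbitSpeed hFc
  have hchain := integral_comp_mul_eq_sub (G := fun t => ∫ u in (0 : ℝ)..t, orbitSpeed F c u)
    (G' := orbitSpeed F c) (C := √(2 * (M + c)))
    (fun t => intervalIntegral.integral_hasDerivAt_right (hp.intervalIntegrable _ _)
      hp.aestronglyMeasurable.stronglyMeasurableAtFilter hp.continuousAt)
    (fun t => by rw [abs_of_nonneg (orbitSpeed_nonneg t)]; exact orbitSpeed_le hM t)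
    (h.intervalIntegrable hQ hd) h.2.1 le_rfl hd le_rfl
  simp only [h.2.2, h.apply_zero hd, intervalIntegral.integral_same, sub_zero] at hchain
  have hpg := h.comp_mul_intervalIntegrable hQ hd hp
  have hdef := h.defect_intervalIntegrable hQ hd hp
  have hconst : ∫ _s in (0 : ℝ)..d, c = c * d := by simp [mul_comm]
  rw [← hchain, ← hconst, ← intervalIntegral.integral_sub hpg (by simp),
    ← intervalIntegral.integral_div,
    ← intervalIntegral.integral_add (hpg.sub (by simp)) (hdef.div_const 2), Jd]
  refine intervalIntegral.integral_congr fun s _ => ?_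
  have := orbitSpeed_sq hF hc (ψ s)
  linarith [sq (g s - orbitSpeed F c (ψ s)), sq (orbitSpeed F c (ψ s)), sq (g s)]

/-- The time an orbit of energy `c` takes to travel from `0` to `t`. -/
def travelTime (F : ℝ → ℝ) (c t : ℝ) : ℝ := ∫ u in (0 : ℝ)..t, (orbitSpeed F c u)⁻¹

lemma orbitSpeed_pos (hF : ∀ t, 0 ≤ F t) (hc : 0 < c) (t : ℝ) : 0 < orbitSpeed F c t :=
  Real.sqrt_pos.2 (by linarith [hF t])

lemma continuous_orbitSpeed_inv (hFc : Continuous F) (hF : ∀ t, 0 ≤ F t) (hc : 0 < c) :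
    Continuous fun t => (orbitSpeed F c t)⁻¹ :=
  (continuous_orbitSpeed hFc).inv₀ fun t => (orbitSpeed_pos hF hc t).ne'

lemma UdRep.integral_eq_travelTime_sub (h : UdRep Q d ψ g) (hQ : 0 < Q)
    (hFc : Continuous F) (hF : ∀ t, 0 ≤ F t) (hc : 0 < c) {x y : ℝ}
    (hx : 0 ≤ x) (hxy : x ≤ y) (hy : y ≤ d) :
    ∫ s in x..y, (orbitSpeed F c (ψ s))⁻¹ * g s
      = travelTime F c (ψ y) - travelTime F c (ψ x) := by
  have hp := continuous_orbitSpeed_inv hFc hF hc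
  refine integral_comp_mul_eq_sub (G' := fun t => (orbitSpeed F c t)⁻¹) (C := (√(2 * c))⁻¹)
    (fun t => intervalIntegral.integral_hasDerivAt_right (hp.intervalIntegrable _ _)
      hp.aestronglyMeasurable.stronglyMeasurableAtFilter hp.continuousAt)
    (fun t => ?_) (h.intervalIntegrable hQ (hx.trans (hxy.trans hy))) h.2.1 hx hxy hy
  rw [abs_of_pos (inv_pos.2 (orbitSpeed_pos hF hc t))]
  have : 0 < √(2 * c) := Real.sqrt_pos.2 (by linarith)
  exact inv_anti₀ this (Real.sqrt_le_sqrt (by linarith [hF t]))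

/-- A small squared defect bounds the growth of the travel time. -/
lemma UdRep.travelTime_sub_le (h : UdRep Q d ψ g) (hQ : 0 < Q)
    (hFc : Continuous F) (hF : ∀ t, 0 ≤ F t) (hc : 0 ≤ c) {η α x y : ℝ} (hη : 0 < η)
    (hα : 0 < α) (hx : 0 ≤ x) (hxy : x ≤ y) (hy : y ≤ d) :
    travelTime F (c + η) (ψ y) - travelTime F (c + η) (ψ x)
      ≤ (y - x) + (√(2 * η))⁻¹ *
        (α * d + α⁻¹ * ∫ s in (0 : ℝ)..d, (g s - orbitSpeed F c (ψ s)) ^ 2) := by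
  have hd : 0 ≤ d := hx.trans (hxy.trans hy)
  have hcη : 0 < c + η := by linarith
  set m := √(2 * η) with hm
  have hmpos : 0 < m := Real.sqrt_pos.2 (by linarith)
  have hp : Continuous (orbitSpeed F c) := continuous_orbitSpeed hFc
  have hdef := h.defect_intervalIntegrable hQ hd hp
  have hsub : uIcc x y ⊆ uIcc 0 d := by
    rw [uIcc_of_le hxy, uIcc_of_le hd]; exact Icc_subset_Icc hx hy
  have hone : IntervalIntegrable (fun _ : ℝ => (1 : ℝ)) volume x y := by simp
  have hbd : IntervalIntegrable
      (fun s => m⁻¹ * (α + α⁻¹ * (g s - orbitSpeed F c (ψ s)) ^ 2)) volume 0 d :=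
    (IntervalIntegrable.add (by simp) (hdef.const_mul _)).const_mul _
  rw [← h.integral_eq_travelTime_sub hQ hFc hF hcη hx hxy hy]
  calc ∫ s in x..y, (orbitSpeed F (c + η) (ψ s))⁻¹ * g s
      ≤ ∫ s in x..y, (1 + m⁻¹ * (α + α⁻¹ * (g s - orbitSpeed F c (ψ s)) ^ 2)) := by
        refine intervalIntegral.integral_mono_on hxy
          ((h.comp_mul_intervalIntegrable hQ hd
            (continuous_orbitSpeed_inv hFc hF hcη)).mono_set hsub)
          (hone.add (hbd.mono_set hsub)) fun s _ => ?_
        set p := orbitSpeed F c (ψ s)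
        set r := orbitSpeed F (c + η) (ψ s)
        have hr : 0 < r := orbitSpeed_pos hF hcη _
        have hpr : p ≤ r := Real.sqrt_le_sqrt (by linarith)
        have hmr : m ≤ r := Real.sqrt_le_sqrt (by linarith [hF (ψ s)])
        have hyoung : |g s - p| ≤ α + α⁻¹ * (g s - p) ^ 2 := by
          rw [← sq_abs]
          set a := |g s - p|
          have h1 : α + α⁻¹ * a ^ 2 - a = α⁻¹ * ((α - a / 2) ^ 2 + 3 / 4 * a ^ 2) := by
            field_simp; ring
          have h2 : 0 ≤ α⁻¹ * ((α - a / 2) ^ 2 + 3 / 4 * a ^ 2) := by positivity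
          linarith
        calc r⁻¹ * g s ≤ r⁻¹ * (r + |g s - p|) := by
              gcongr; linarith [le_abs_self (g s - p)]
          _ = 1 + r⁻¹ * |g s - p| := by field_simp
          _ ≤ 1 + m⁻¹ * (α + α⁻¹ * (g s - p) ^ 2) := by gcongr
    _ = (y - x) + ∫ s in x..y, m⁻¹ * (α + α⁻¹ * (g s - orbitSpeed F c (ψ s)) ^ 2) := by
        rw [intervalIntegral.integral_add hone (hbd.mono_set hsub)]
        simp
    _ ≤ (y - x) + ∫ s in (0 : ℝ)..d, m⁻¹ * (α + α⁻¹ * (g s - orbitSpeed F c (ψ s)) ^ 2) := by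
        gcongr
        refine intervalIntegral.integral_mono_interval hx hxy hy (ae_of_all _ fun s => ?_) hbd
        simp only [Pi.zero_apply]
        positivity
    _ = _ := by
        rw [intervalIntegral.integral_const_mul, intervalIntegral.integral_add (by simp)
          (hdef.const_mul _), intervalIntegral.integral_const_mul]
        simp [mul_comm]

/-- The travel time is expansive, with constant the inverse of the maximal speed. -/
lemma abs_sub_le_mul_travelTime {B : ℝ} (hFc : Continuous F) (hF : ∀ t, 0 ≤ F t) (hc : 0 < c)
    (hB : ∀ t, orbitSpeed F c t ≤ B) (a b : ℝ) :
    |a - b| ≤ B * |travelTime F c a - travelTime F c b| := by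
  wlog hab : b ≤ a generalizing a b
  · rw [abs_sub_comm, abs_sub_comm (travelTime F c a)]
    exact this b a (not_le.1 hab).le
  have hp := continuous_orbitSpeed_inv hFc hF hc
  have hBpos : 0 < B := (orbitSpeed_pos hF hc 0).trans_le (hB 0)
  have heq : travelTime F c a - travelTime F c b = ∫ u in b..a, (orbitSpeed F c u)⁻¹ :=
    intervalIntegral.integral_interval_sub_left (hp.intervalIntegrable _ _)
      (hp.intervalIntegrable _ _)
  have hle : ∫ _u in b..a, B⁻¹ ≤ ∫ u in b..a, (orbitSpeed F c u)⁻¹ :=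
    intervalIntegral.integral_mono_on hab (by simp) (hp.intervalIntegrable _ _)
      fun u _ => inv_anti₀ (orbitSpeed_pos hF hc u) (hB u)
  rw [intervalIntegral.integral_const, smul_eq_mul] at hle
  rw [heq, abs_of_nonneg (sub_nonneg.2 hab)]
  calc a - b = B * ((a - b) * B⁻¹) := by field_simp
    _ ≤ _ := by gcongr; exact hle.trans (le_abs_self _)

/-- As the energy excess vanishes, the travel time from `0` to `Q` tends to `d`. -/
lemma UdRep.exists_travelTime_gt (h : UdRep Q d φ g) (hQ : 0 < Q) (hd : 0 ≤ d)
    (hFc : Continuous F) (hF : ∀ t, 0 ≤ F t) (hc : 0 ≤ c)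
    (hFpos : ∀ x ∈ Ioo 0 d, 0 < F (φ x))
    (hg : ∀ᵐ x, x ∈ Ioo 0 d → g x = orbitSpeed F c (φ x)) {δ : ℝ} (hδ : 0 < δ) :
    ∃ η, 0 < η ∧ η ≤ 1 ∧ d - δ < travelTime F (c + η) Q := by
  have hne : ∀ᵐ x : ℝ, x ≠ d := by simp [ae_iff, measure_singleton]
  have hlim : Tendsto (fun η => ∫ s in (0 : ℝ)..d, (orbitSpeed F (c + η) (φ s))⁻¹ * g s)
      (𝓝[>] 0) (𝓝 (∫ _s in (0 : ℝ)..d, (1 : ℝ))) := by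
    refine intervalIntegral.tendsto_integral_filter_of_dominated_convergence (fun _ => 1)
      ?_ ?_ (by simp) ?_
    · filter_upwards [self_mem_nhdsWithin] with η hη
      have hη' : 0 < c + η := by linarith [mem_Ioi.1 hη]
      exact (h.comp_mul_intervalIntegrable hQ hd
        (continuous_orbitSpeed_inv hFc hF hη')).def'.aestronglyMeasurable
    · filter_upwards [self_mem_nhdsWithin] with η hη
      have hη0 : 0 < η := hη
      filter_upwards [hg, hne] with s hs hsd hsI
      rw [uIoc_of_le hd] at hsI
      rw [hs ⟨hsI.1, lt_of_le_of_ne hsI.2 hsd⟩, Real.norm_of_nonneg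
        (mul_nonneg (inv_nonneg.2 (orbitSpeed_nonneg _)) (orbitSpeed_nonneg _)),
        inv_mul_le_one₀ (orbitSpeed_pos hF (by linarith) _)]
      exact Real.sqrt_le_sqrt (by linarith)
    · filter_upwards [hg, hne] with s hs hsd hsI
      rw [uIoc_of_le hd] at hsI
      have hsI' : s ∈ Ioo 0 d := ⟨hsI.1, lt_of_le_of_ne hsI.2 hsd⟩
      have hpos : 0 < orbitSpeed F c (φ s) :=
        Real.sqrt_pos.2 (by linarith [hFpos s hsI'])
      rw [hs hsI']
      have hcont : Continuous fun η => orbitSpeed F (c + η) (φ s) := by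
        unfold orbitSpeed; fun_prop
      have h0 : orbitSpeed F (c + 0) (φ s) ≠ 0 := by rw [add_zero]; exact hpos.ne'
      have h1 := ((hcont.tendsto 0).inv₀ h0).mul_const (orbitSpeed F c (φ s))
      rw [add_zero, inv_mul_cancel₀ hpos.ne'] at h1
      exact h1.mono_left nhdsWithin_le_nhds
  have hint : ∫ _s in (0 : ℝ)..d, (1 : ℝ) = d := by simp
  rw [hint] at hlim
  have hev := hlim.eventually (lt_mem_nhds (show d - δ < d by linarith))
  obtain ⟨η, hη, hηI⟩ := (hev.and (Ioc_mem_nhdsGT (zero_lt_one' ℝ))).exists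
  refine ⟨η, hηI.1, hηI.2, ?_⟩
  rw [h.integral_eq_travelTime_sub hQ hFc hF (by linarith [hηI.1]) le_rfl hd le_rfl,
    h.2.2, h.apply_zero hd] at hη
  simpa [travelTime] using hη

end Orbit

/-- Quantitative minimality of `φ̄_d`: functions in `U_d` that are uniformly far
from `φ̄_d` have energy at least `J_d(φ̄_d) + σ` for some `σ > 0`. -/
theorem stmt15
    (Q : ℝ) (hQ : 0 < Q)
    (κ : ℝ → ℝ) (hκ : ∀ t ∈ Set.Icc (0 : ℝ) 1, κ (Q * (3 * t ^ 2 - 2 * t ^ 3)) = t)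
    (f : ℝ → ℝ) (hf : ∀ s : ℝ, f s = 6 * Q * (1 - 2 * κ s))
    (F : ℝ → ℝ) (hF : ∀ t : ℝ, F t = ∫ s in (0 : ℝ)..t, Set.indicator (Set.Icc 0 Q) f s)
    (d : ℝ) (hd : d ∈ Set.Ioc (0 : ℝ) 1)
    (φd : ℝ → ℝ) (hφd : IsBVPSol Q f d φd)
    (gφ : ℝ → ℝ) (hgφ : UdRep Q d φd gφ) :
    ∀ ε > 0, ∃ σ > 0, ∀ ψ g : ℝ → ℝ, UdRep Q d ψ g →
      (∃ x ∈ Set.Icc (0 : ℝ) d, ε < |ψ x - φd x|) →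
      Jd F d φd gφ + σ ≤ Jd F d ψ g := by
  have hd0 : 0 < d := hd.1
  have hfc := continuousOn_force hκ hf
  have hFc := continuous_potential hfc hF
  have hFnn : ∀ t, 0 ≤ F t := fun t => (potential_bounds hQ hκ hf hF t).1
  have hFle : ∀ t, F t ≤ 18 * Q ^ 2 := fun t => (potential_bounds hQ hκ hf hF t).2
  have hF0 : F 0 = 0 := by rw [hF, intervalIntegral.integral_same]
  have hFpos : ∀ t ∈ Ioo 0 Q, 0 < F t := fun t ht => potential_pos hQ hκ hf hF ht
  obtain ⟨c, hc, hspeed⟩ := hφd.exists_deriv_eq_orbitSpeed hQ hd0 hFc hF0 hFpos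
    fun t ht => hasDerivAt_potential hfc hF ht
  have hgae : ∀ᵐ x, x ∈ Ioo 0 d → gφ x = orbitSpeed F c (φd x) := by
    filter_upwards [hgφ.ae_eq_deriv hQ hd0.le] with x hx hxI
    rw [hx hxI, hspeed x hxI]
  have hdefect : ∫ s in (0 : ℝ)..d, (gφ s - orbitSpeed F c (φd s)) ^ 2 = 0 := by
    refine intervalIntegral.integral_zero_ae ?_
    have hne : ∀ᵐ x : ℝ, x ≠ d := by simp [ae_iff, measure_singleton]
    filter_upwards [hgae, hne] with s hs hsd hsI
    rw [uIoc_of_le hd0.le] at hsI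
    rw [hs ⟨hsI.1, lt_of_le_of_ne hsI.2 hsd⟩, sub_self]
    norm_num
  intro ε hε
  set B := √(2 * (18 * Q ^ 2 + (c + 1))) with hBdef
  have hBpos : 0 < B := Real.sqrt_pos.2 (by positivity)
  set δ := ε / (4 * B) with hδdef
  have hδ : 0 < δ := by positivity
  obtain ⟨η, hη, hη1, hT⟩ := hgφ.exists_travelTime_gt hQ hd0.le hFc hFnn hc
    (fun x hx => hFpos _ (hφd.2.2.2.2.2 x hx)) hgae hδ
  have hcη : 0 < c + η := by linarith
  have hB : ∀ t, orbitSpeed F (c + η) t ≤ B := fun t =>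
    (orbitSpeed_le hFle t).trans (Real.sqrt_le_sqrt (by linarith))
  set m := √(2 * η) with hm
  have hmpos : 0 < m := Real.sqrt_pos.2 (by linarith)
  set α := m * δ / (2 * d) with hα
  have hαpos : 0 < α := by positivity
  refine ⟨α * (m * δ / 2) / 2, by positivity, fun ψ g hψ hfar => ?_⟩
  by_contra hlt
  obtain ⟨x, hx, hxε⟩ := hfar
  have hnear : ∀ u v : ℝ → ℝ, UdRep Q d u v →
      ∫ s in (0 : ℝ)..d, (v s - orbitSpeed F c (u s)) ^ 2 ≤ α * (m * δ / 2) →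
      |travelTime F (c + η) (u x) - x| ≤ 2 * δ := by
    intro u v huv hD
    have hsmall : m⁻¹ * (α * d + α⁻¹ * ∫ s in (0 : ℝ)..d, (v s - orbitSpeed F c (u s)) ^ 2)
        ≤ δ := by
      calc _ ≤ m⁻¹ * (α * d + α⁻¹ * (α * (m * δ / 2))) := by gcongr
        _ = δ := by
          rw [inv_mul_cancel_left₀ hαpos.ne', hα]
          field_simp
          norm_num
    have hl := huv.travelTime_sub_le hQ hFc hFnn hc hη hαpos le_rfl hx.1 hx.2
    have hr := huv.travelTime_sub_le hQ hFc hFnn hc hη hαpos hx.1 hx.2 le_rfl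
    have h0 : travelTime F (c + η) 0 = 0 := by simp [travelTime]
    rw [huv.apply_zero hd0.le, h0] at hl
    rw [huv.2.2] at hr
    rw [abs_le]
    constructor <;> linarith
  have hEψ := hψ.energy_eq hQ hd0.le hFc hFnn hFle hc
  have hEφ := hgφ.energy_eq hQ hd0.le hFc hFnn hFle hc
  rw [hdefect] at hEφ
  have h1 := hnear ψ g hψ (by linarith)
  have h2 := hnear φd gφ hgφ (by rw [hdefect]; positivity)
  have h3 := abs_sub_le_mul_travelTime hFc hFnn hcη hB (ψ x) (φd x)
  have h4 : |travelTime F (c + η) (ψ x) - travelTime F (c + η) (φd x)| ≤ 4 * δ := by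
    rw [abs_le] at *
    constructor <;> linarith [h1.1, h1.2, h2.1, h2.2]
  have h5 : B * (4 * δ) = ε := by rw [hδdef]; field_simp
  nlinarith
end
end
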